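/- Let i be an input-enabled transition system and t a test case for i, let σ ∈ L_{t⫿i}*, and let q_t, q_t' ∈ Q_t, q_i, q_i' ∈ Q_i. Then q_t ⫿ q_i ==σ==> q_t' ⫿ q_i' if and only if q_t ==σ↾L_t==> q_t' and q_i ==(σ[θ/δ])↾L_i^δ==> q_i'. -/

import Mathlib

/-- Labels extended with the quiescence label `δ`. -/
inductive ELabel (Lab : Type) : Type
  | lab : Lab → ELabel Lab
  | delta : ELabel Lab

namespace ELabel

/-- Membership of an extended label in `𝓛^δ = 𝓛 ∪ {δ}`. -/
def inL {Lab : Type} (Ls : Set Lab) : ELabel Lab → Prop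
  | lab ℓ => ℓ ∈ Ls
  | delta => True

end ELabel

/-- A trace lies in `(𝓛^δ)*`. -/
def TraceIn {Lab : Type} (Ls : Set Lab) (σ : List (ELabel Lab)) : Prop :=
  ∀ x ∈ σ, ELabel.inL Ls x

/-- A labelled transition system.  `T q none q'` is an internal `τ`-step,
`T q (some ℓ) q'` is a step labelled `ℓ`. -/
structure LTS (Q : Type) (Lab : Type) where
  I : Set Lab
  U : Set Lab
  T : Q → Option Lab → Q → Prop
  q0 : Q

namespace LTS

variable {Q Lab : Type}

/-- The label set `L = I ∪ U`. -/
def L (M : LTS Q Lab) : Set Lab := M.I ∪ M.U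

/-- Standing assumptions on all LTSs: countable, disjoint input/output label
sets, transitions labelled within `L`, strong convergence (no infinite
`τ`-sequences), and image-finiteness. -/
def WellFormed (M : LTS Q Lab) : Prop :=
  M.I.Countable ∧ M.U.Countable ∧ Disjoint M.I M.U ∧
  (∀ q ℓ q', M.T q (some ℓ) q' → ℓ ∈ M.L) ∧
  (¬ ∃ f : ℕ → Q, ∀ n, M.T (f n) none (f (n + 1))) ∧
  (∀ q a, {q' | M.T q a q'}.Finite)

/-- A state is quiescent if neither an output nor `τ` is enabled in it. -/
def Quiescent (M : LTS Q Lab) (q : Q) : Prop :=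
  (∀ x ∈ M.U, ∀ q', ¬ M.T q (some x) q') ∧ ∀ q', ¬ M.T q none q'

/-- A single visible step `q --x--> q'` for `x ∈ L^δ`, where the quiescence
label `δ` gives a self-loop at quiescent states. -/
def VStep (M : LTS Q Lab) (q : Q) : ELabel Lab → Q → Prop
  | .lab ℓ, q' => M.T q (some ℓ) q'
  | .delta, q' => q' = q ∧ M.Quiescent q

/-- Zero or more `τ`-steps: `q ==ε==> q'`. -/
def Eps (M : LTS Q Lab) : Q → Q → Prop :=
  Relation.ReflTransGen fun a b => M.T a none b

/-- Weak transition `q ==σ==> q'` for `σ ∈ (L^δ)*`. -/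
inductive W (M : LTS Q Lab) : Q → List (ELabel Lab) → Q → Prop
  | nil {q q' : Q} : M.Eps q q' → W M q [] q'
  | snoc {q q1 q2 q' : Q} {σ : List (ELabel Lab)} {x : ELabel Lab} :
      W M q σ q1 → M.VStep q1 x q2 → M.Eps q2 q' → W M q (σ ++ [x]) q'

/-- `X after σ`, for a set of states `X`. -/
def afterSet (M : LTS Q Lab) (X : Set Q) (σ : List (ELabel Lab)) : Set Q :=
  {q' | ∃ q ∈ X, M.W q σ q'}

/-- `M after σ`, from the initial state. -/
def after (M : LTS Q Lab) (σ : List (ELabel Lab)) : Set Q :=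
  {q' | M.W M.q0 σ q'}

/-- The predicate underlying `out(q) ⊆ U ∪ {δ}`. -/
def outLabel (M : LTS Q Lab) (q : Q) : ELabel Lab → Prop
  | .lab ℓ => ℓ ∈ M.U ∧ ∃ q', M.T q (some ℓ) q'
  | .delta => M.Quiescent q

/-- `out(q)`. -/
def outq (M : LTS Q Lab) (q : Q) : Set (ELabel Lab) :=
  {x | M.outLabel q x}

/-- `in(q) = {ℓ ∈ I | q ==ℓ==>}`. -/
def inq (M : LTS Q Lab) (q : Q) : Set Lab :=
  {ℓ | ℓ ∈ M.I ∧ ∃ q', M.W q [ELabel.lab ℓ] q'}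

/-- `out(X) = ⋃_{q ∈ X} out(q)`. -/
def outSet (M : LTS Q Lab) (X : Set Q) : Set (ELabel Lab) :=
  ⋃ q ∈ X, M.outq q

/-- `in(X) = ⋂_{q ∈ X} in(q)`. -/
def inSet (M : LTS Q Lab) (X : Set Q) : Set Lab :=
  ⋂ q ∈ X, M.inq q

/-- Input-enabledness: `M` is an IOTS. -/
def InputEnabled (M : LTS Q Lab) : Prop :=
  ∀ q, ∀ ℓ ∈ M.I, ∃ q', M.W q [ELabel.lab ℓ] q'

/-- `Utraces(M)`. -/
def Utraces (M : LTS Q Lab) : Set (List (ELabel Lab)) :=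
  {σ | TraceIn M.L σ ∧ (∃ q', M.W M.q0 σ q') ∧
    ∀ σ1 ℓ σ2, σ = σ1 ++ ELabel.lab ℓ :: σ2 → ℓ ∈ M.I →
      ∀ q, M.W M.q0 σ1 q → ∃ q', M.W q [ELabel.lab ℓ] q'}

/-- An LTS is utrace-closed when every trace over `(L^δ)*` that it can
perform is a utrace. -/
def UtraceClosed (M : LTS Q Lab) : Prop :=
  ∀ σ : List (ELabel Lab), TraceIn M.L σ → (∃ q', M.W M.q0 σ q') → σ ∈ M.Utraces

end LTS

/-- `i uioco s`. -/
def Uioco {Qi Qs Lab : Type} (i : LTS Qi Lab) (s : LTS Qs Lab) : Prop :=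
  ∀ σ ∈ s.Utraces, i.outSet (i.after σ) ⊆ s.outSet (s.after σ)

/-- Composability: disjoint output label sets. -/
def Composable {Qs Qe Lab : Type} (s : LTS Qs Lab) (e : LTS Qe Lab) : Prop :=
  s.U ∩ e.U = ∅

/-- Parallel composition `s ∥ e`. -/
def par {Qs Qe Lab : Type} (s : LTS Qs Lab) (e : LTS Qe Lab) : LTS (Qs × Qe) Lab where
  I := (s.I \ e.U) ∪ (e.I \ s.U)
  U := s.U ∪ e.U
  T := fun p a p' =>
    match a with
    | none =>
        (s.T p.1 none p'.1 ∧ p'.2 = p.2) ∨ (e.T p.2 none p'.2 ∧ p'.1 = p.1)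
    | some ℓ =>
        (ℓ ∈ s.L ∧ ℓ ∉ e.L ∧ s.T p.1 (some ℓ) p'.1 ∧ p'.2 = p.2) ∨
        (ℓ ∈ e.L ∧ ℓ ∉ s.L ∧ e.T p.2 (some ℓ) p'.2 ∧ p'.1 = p.1) ∨
        (ℓ ∈ s.L ∧ ℓ ∈ e.L ∧ s.T p.1 (some ℓ) p'.1 ∧ e.T p.2 (some ℓ) p'.2)
  q0 := (s.q0, e.q0)

/-- `s accepts e`: along utraces of `s ∥ e`, every output of `e` that is an
input of `s` is (weakly) enabled in `s`. -/
def Accepts {Qs Qe Lab : Type} (s : LTS Qs Lab) (e : LTS Qe Lab) : Prop :=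
  ∀ σ ∈ (par s e).Utraces, ∀ qs qe, (par s e).W (par s e).q0 σ (qs, qe) →
    ∀ ℓ, ELabel.lab ℓ ∈ e.outq qe → ℓ ∈ s.I → ℓ ∈ s.inq qs

/-- `s mutually accepts e`. -/
def MutuallyAccepts {Qs Qe Lab : Type} (s : LTS Qs Lab) (e : LTS Qe Lab) : Prop :=
  Accepts s e ∧ Accepts e s

/-- `R` is an ecosim for `s` and `e`. -/
def IsEcosim {Qs Qe Lab : Type} (s : LTS Qs Lab) (e : LTS Qe Lab)
    (R : Set (Set Qs × Set Qe)) : Prop :=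
  (s.after [], e.after []) ∈ R ∧
  ∀ Xs Xe, (Xs, Xe) ∈ R →
    (∀ ℓ, ELabel.lab ℓ ∈ e.outSet Xe → ℓ ∈ s.I →
      ℓ ∈ s.inSet Xs ∧
        (s.afterSet Xs [ELabel.lab ℓ], e.afterSet Xe [ELabel.lab ℓ]) ∈ R) ∧
    (∀ ℓ, ELabel.lab ℓ ∈ s.outSet Xs → ℓ ∈ e.I →
      ℓ ∈ e.inSet Xe ∧
        (s.afterSet Xs [ELabel.lab ℓ], e.afterSet Xe [ELabel.lab ℓ]) ∈ R) ∧
    (∀ ℓ, (ELabel.lab ℓ ∈ e.outSet Xe ∨ ℓ ∈ e.inSet Xe) → ℓ ∉ s.L →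
      (Xs, e.afterSet Xe [ELabel.lab ℓ]) ∈ R) ∧
    (∀ ℓ, (ELabel.lab ℓ ∈ s.outSet Xs ∨ ℓ ∈ s.inSet Xs) → ℓ ∉ e.L →
      (s.afterSet Xs [ELabel.lab ℓ], Xe) ∈ R) ∧
    (∀ ℓ, ℓ ∈ s.inSet Xs → ℓ ∈ e.inSet Xe →
      (s.afterSet Xs [ELabel.lab ℓ], e.afterSet Xe [ELabel.lab ℓ]) ∈ R) ∧
    (ELabel.delta ∈ s.outSet Xs → ELabel.delta ∈ e.outSet Xe →
      (s.afterSet Xs [ELabel.delta], e.afterSet Xe [ELabel.delta]) ∈ R)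

/-- `s eco e`: there exists an ecosim for `s` and `e`. -/
def Eco {Qs Qe Lab : Type} (s : LTS Qs Lab) (e : LTS Qe Lab) : Prop :=
  ∃ R, IsEcosim s e R

/-- `R_U(s,e)`: the smallest relation closed under the given rules. -/
inductive RU {Qs Qe Lab : Type} (s : LTS Qs Lab) (e : LTS Qe Lab) :
    Set Qs → Set Qe → Prop
  | base : RU s e (s.after []) (e.after [])
  | syncOutE {Xs : Set Qs} {Xe : Set Qe} (ℓ : Lab) :
      RU s e Xs Xe → ELabel.lab ℓ ∈ e.outSet Xe → ℓ ∈ s.I →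
      RU s e (s.afterSet Xs [ELabel.lab ℓ]) (e.afterSet Xe [ELabel.lab ℓ])
  | syncOutS {Xs : Set Qs} {Xe : Set Qe} (ℓ : Lab) :
      RU s e Xs Xe → ELabel.lab ℓ ∈ s.outSet Xs → ℓ ∈ e.I →
      RU s e (s.afterSet Xs [ELabel.lab ℓ]) (e.afterSet Xe [ELabel.lab ℓ])
  | internalE {Xs : Set Qs} {Xe : Set Qe} (ℓ : Lab) :
      RU s e Xs Xe → (ELabel.lab ℓ ∈ e.outSet Xe ∨ ℓ ∈ e.inSet Xe) → ℓ ∉ s.L →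
      RU s e Xs (e.afterSet Xe [ELabel.lab ℓ])
  | internalS {Xs : Set Qs} {Xe : Set Qe} (ℓ : Lab) :
      RU s e Xs Xe → (ELabel.lab ℓ ∈ s.outSet Xs ∨ ℓ ∈ s.inSet Xs) → ℓ ∉ e.L →
      RU s e (s.afterSet Xs [ELabel.lab ℓ]) Xe
  | syncIn {Xs : Set Qs} {Xe : Set Qe} (ℓ : Lab) :
      RU s e Xs Xe → ℓ ∈ s.inSet Xs → ℓ ∈ e.inSet Xe →
      RU s e (s.afterSet Xs [ELabel.lab ℓ]) (e.afterSet Xe [ELabel.lab ℓ])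
  | qdelta {Xs : Set Qs} {Xe : Set Qe} :
      RU s e Xs Xe → ELabel.delta ∈ s.outSet Xs → ELabel.delta ∈ e.outSet Xe →
      RU s e (s.afterSet Xs [ELabel.delta]) (e.afterSet Xe [ELabel.delta])

open Classical in
/-- Projection `σ↾𝓛^δ` of a trace onto an (extended) label set: keeps `δ`
and the labels in `Ls`, removes all other labels. -/
noncomputable def projD {Lab : Type} (σ : List (ELabel Lab)) (Ls : Set Lab) :
    List (ELabel Lab) :=
  σ.filter fun x => decide (ELabel.inL Ls x)

open Classical in
/-- Projection `σ↾𝓛` of a trace of plain labels onto a label set. -/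
noncomputable def projL {Lab : Type} (σ : List Lab) (Ls : Set Lab) : List Lab :=
  σ.filter fun ℓ => decide (ℓ ∈ Ls)

open Classical in
/-- Substitution `σ[θ/δ]` of the label `θ` by the quiescence label `δ`. -/
noncomputable def substTheta {Lab : Type} (θ : Lab) (σ : List Lab) :
    List (ELabel Lab) :=
  σ.map fun ℓ => if ℓ = θ then ELabel.delta else ELabel.lab ℓ

/-- `⟨X⟩`: componentwise collection of a set of pairs of states. -/
def collect {Qs Qe : Type} (X : Set (Qs × Qe)) : Set Qs × Set Qe :=
  (Prod.fst '' X, Prod.snd '' X)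

/-- `q_s accepts q_e over σ`. -/
def AcceptsOver {Qs Qe Lab : Type} (s : LTS Qs Lab) (e : LTS Qe Lab)
    (qs : Qs) (qe : Qe) (σ : List (ELabel Lab)) : Prop :=
  ∀ σ1 σ2 : List (ELabel Lab), σ1 ++ σ2 = σ →
    ∀ (qs' : Qs) (qe' : Qe), (par s e).W (qs, qe) σ1 (qs', qe') →
      ∀ ℓ, ELabel.lab ℓ ∈ e.outq qe' → ℓ ∈ s.I → ℓ ∈ s.inq qs' ∧ ℓ ∈ e.U

/-- `q_s mutually accepts q_e over σ`. -/
def MutuallyAcceptsOver {Qs Qe Lab : Type} (s : LTS Qs Lab) (e : LTS Qe Lab)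
    (qs : Qs) (qe : Qe) (σ : List (ELabel Lab)) : Prop :=
  AcceptsOver s e qs qe σ ∧ AcceptsOver e s qe qs σ

/-- A test case: a quasi-finite tree-shaped LTS without `τ`-transitions, with
terminal states `pass` and `fail` carrying input self-loops, a special
quiescence-observation input `θ`, at most one output transition per state,
and receptive to all inputs other than `θ`. -/
structure TestCase (Qt Lab : Type) extends LTS Qt Lab where
  passS : Qt
  failS : Qt
  theta : Lab
  theta_input : theta ∈ I
  no_tau : ∀ q q', ¬ T q none q'
  tree : ∀ q, q ≠ q0 → q ≠ passS → q ≠ failS →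
    ∃! p : Qt × Option Lab, T p.1 p.2 q
  pass_loops : ∀ ℓ ∈ I, T passS (some ℓ) passS
  pass_terminal : ∀ a q', T passS a q' → q' = passS ∧ ∃ ℓ ∈ I, a = some ℓ
  fail_loops : ∀ ℓ ∈ I, T failS (some ℓ) failS
  fail_terminal : ∀ a q', T failS a q' → q' = failS ∧ ∃ ℓ ∈ I, a = some ℓ
  one_output : ∀ q ℓ ℓ' q' q'', ℓ ∈ U → ℓ' ∈ U →
    T q (some ℓ) q' → T q (some ℓ') q'' → ℓ = ℓ' ∧ q' = q''
  receptive : ∀ q, ∀ ℓ ∈ I, ℓ ≠ theta → ∃ q', T q (some ℓ) q'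

/-- Test execution `t ⫿ i` of a test case `t` with an implementation `i`. -/
def testExec {Qt Qi Lab : Type} (t : TestCase Qt Lab) (i : LTS Qi Lab) :
    LTS (Qt × Qi) Lab where
  I := ∅
  U := i.U ∪ (t.toLTS.L \ {t.theta})
  T := fun p a p' =>
    match a with
    | none => i.T p.2 none p'.2 ∧ p'.1 = p.1
    | some ℓ =>
        (ℓ ∈ i.L ∧ ℓ ∉ t.toLTS.L ∧ i.T p.2 (some ℓ) p'.2 ∧ p'.1 = p.1) ∨
        (ℓ ∈ t.toLTS.L ∧ ℓ ∉ i.L ∧ ℓ ≠ t.theta ∧ t.T p.1 (some ℓ) p'.1 ∧ p'.2 = p.2) ∨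
        (ℓ ∈ i.L ∧ ℓ ∈ t.toLTS.L ∧ t.T p.1 (some ℓ) p'.1 ∧ i.T p.2 (some ℓ) p'.2) ∨
        (ℓ = t.theta ∧ t.T p.1 (some ℓ) p'.1 ∧ p'.2 = p.2 ∧ i.Quiescent p.2)
  q0 := (t.q0, i.q0)

theorem W_nil_iff {Q Lab : Type} (M : LTS Q Lab) (q q' : Q) :
    M.W q [] q' ↔ M.Eps q q' := by
  constructor
  · intro h
    generalize hs : ([] : List (ELabel Lab)) = s at h
    cases h with
    | nil h => exact h
    | snoc _ _ _ => simp at hs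
  · exact LTS.W.nil

theorem W_snoc_iff {Q Lab : Type} (M : LTS Q Lab) (q q' : Q) (σ : List (ELabel Lab))
    (x : ELabel Lab) :
    M.W q (σ ++ [x]) q' ↔ ∃ q1 q2, M.W q σ q1 ∧ M.VStep q1 x q2 ∧ M.Eps q2 q' := by
  constructor
  · intro h
    generalize hs : σ ++ [x] = s at h
    cases h with
    | nil h => simp at hs
    | snoc h1 h2 h3 =>
      obtain ⟨rfl, h⟩ := List.append_inj' hs rfl
      obtain rfl : x = _ := by simpa using h
      exact ⟨_, _, h1, h2, h3⟩
  · rintro ⟨q1, q2, h1, h2, h3⟩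
    exact LTS.W.snoc h1 h2 h3

theorem W_eps {Q Lab : Type} (M : LTS Q Lab) {q q1 q' : Q} {σ : List (ELabel Lab)}
    (h : M.W q σ q1) (h' : M.Eps q1 q') : M.W q σ q' := by
  cases h with
  | nil h => exact LTS.W.nil (Relation.ReflTransGen.trans h h')
  | snoc h1 h2 h3 => exact LTS.W.snoc h1 h2 (Relation.ReflTransGen.trans h3 h')

theorem test_eps {Qt Lab : Type} (t : TestCase Qt Lab) (q q' : Qt) :
    t.toLTS.Eps q q' ↔ q' = q := by
  constructor
  · intro h
    induction h with
    | refl => rfl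
    | tail _ h _ => exact absurd h (t.no_tau _ _)
  · rintro rfl
    exact Relation.ReflTransGen.refl

theorem exec_eps {Qt Qi Lab : Type} (t : TestCase Qt Lab) (i : LTS Qi Lab)
    (p p' : Qt × Qi) :
    (testExec t i).Eps p p' ↔ p'.1 = p.1 ∧ i.Eps p.2 p'.2 := by
  constructor
  · intro h
    induction h with
    | refl => exact ⟨rfl, Relation.ReflTransGen.refl⟩
    | tail _ h ih => exact ⟨h.2.trans ih.1, ih.2.tail h.1⟩
  · obtain ⟨a, b⟩ := p
    obtain ⟨a', b'⟩ := p'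
    rintro ⟨h, h'⟩
    obtain rfl : a' = a := h
    change i.Eps b b' at h'
    induction h' with
    | refl => exact Relation.ReflTransGen.refl
    | tail _ h ih => exact Relation.ReflTransGen.tail ih ⟨h, rfl⟩

/-- for a test case `t` for an input-enabled `i` and a trace
`σ ∈ L_{t⫿i}*`:  `q_t ⫿ q_i ==σ==> q_t' ⫿ q_i'` iff
`q_t ==σ↾L_t==> q_t'` and `q_i ==(σ[θ/δ])↾L_i^δ==> q_i'`. -/
theorem project_from_testexec {Qt Qi Lab : Type}
    (i : LTS Qi Lab) (hi : i.WellFormed) (hienabled : i.InputEnabled)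
    (t : TestCase Qt Lab) (htheta : t.theta ∉ i.L)
    (σ : List Lab) (hσ : ∀ ℓ ∈ σ, ℓ ∈ i.L ∪ t.toLTS.L)
    (qt qt' : Qt) (qi qi' : Qi) :
    (testExec t i).W (qt, qi) (σ.map ELabel.lab) (qt', qi') ↔
      t.toLTS.W qt ((projL σ t.toLTS.L).map ELabel.lab) qt' ∧
        i.W qi (projD (substTheta t.theta σ) i.L) qi' := by
  classical
  induction σ using List.reverseRecOn generalizing qt' qi' with
  | nil =>
    simp only [projL, projD, substTheta, List.map_nil, List.filter_nil, W_nil_iff, test_eps,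
      exec_eps]
  | append_singleton σ ℓ ih =>
    have ih := ih (fun x hx => hσ x (by simp [hx]))
    have hℓ : ℓ ∈ i.L ∪ t.toLTS.L := hσ ℓ (by simp)
    have hth : t.theta ∈ t.toLTS.L := Or.inl t.theta_input
    have e1 : projL (σ ++ [ℓ]) t.toLTS.L =
        projL σ t.toLTS.L ++ (if ℓ ∈ t.toLTS.L then [ℓ] else []) := by
      by_cases h : ℓ ∈ t.toLTS.L <;> simp [projL, h]
    have e2 : projD (substTheta t.theta (σ ++ [ℓ])) i.L =
        projD (substTheta t.theta σ) i.L ++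
          (if ℓ = t.theta then [ELabel.delta] else if ℓ ∈ i.L then [ELabel.lab ℓ] else []) := by
      by_cases h : ℓ = t.theta
      · have hd : ELabel.inL i.L ELabel.delta := trivial
        simp [projD, substTheta, h, hd]
      · by_cases h' : ℓ ∈ i.L <;> simp [projD, substTheta, h, h', ELabel.inL]
    rw [e1, e2, List.map_append, List.map_append, List.map_singleton, W_snoc_iff]
    simp only [Prod.exists, ih, exec_eps]
    by_cases h : ℓ = t.theta
    · subst h
      simp only [hth, if_true, List.map_singleton, W_snoc_iff, test_eps]
      constructor
      · rintro ⟨a, b, c, d, ⟨ha, hb⟩, hs, rfl, he⟩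
        rcases hs with hs | hs | hs | hs
        · exact absurd hs.1 htheta
        · exact absurd rfl hs.2.2.1
        · exact absurd hs.1 htheta
        · exact ⟨⟨a, _, ha, hs.2.1, rfl⟩, b, d, hb, ⟨hs.2.2.1, hs.2.2.2⟩, he⟩
      · rintro ⟨⟨a, c, ha, hs, rfl⟩, b, d, hb, hq, he⟩
        exact ⟨a, b, _, d, ⟨ha, hb⟩, Or.inr (Or.inr (Or.inr ⟨rfl, hs, hq.1, hq.2⟩)), rfl, he⟩
    · by_cases h1 : ℓ ∈ t.toLTS.L
      · by_cases h2 : ℓ ∈ i.L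
        · simp only [h, h1, h2, if_true, if_false, List.map_singleton, W_snoc_iff, test_eps]
          constructor
          · rintro ⟨a, b, c, d, ⟨ha, hb⟩, hs, rfl, he⟩
            rcases hs with hs | hs | hs | hs
            · exact absurd h1 hs.2.1
            · exact absurd h2 hs.2.1
            · exact ⟨⟨a, _, ha, hs.2.2.1, rfl⟩, b, d, hb, hs.2.2.2, he⟩
            · exact absurd hs.1 h
          · rintro ⟨⟨a, c, ha, hs, rfl⟩, b, d, hb, hq, he⟩
            exact ⟨a, b, _, d, ⟨ha, hb⟩, Or.inr (Or.inr (Or.inl ⟨h2, h1, hs, hq⟩)), rfl, he⟩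
        · simp only [h, h1, h2, if_true, if_false, List.map_singleton, W_snoc_iff, test_eps,
            List.append_nil]
          constructor
          · rintro ⟨a, b, c, d, ⟨ha, hb⟩, hs, rfl, he⟩
            rcases hs with hs | hs | hs | hs
            · exact absurd h1 hs.2.1
            · obtain rfl : d = b := hs.2.2.2.2
              exact ⟨⟨a, _, ha, hs.2.2.2.1, rfl⟩, W_eps i hb he⟩
            · exact absurd hs.1 h2
            · exact absurd hs.1 h
          · rintro ⟨⟨a, c, ha, hs, rfl⟩, hb⟩
            exact ⟨a, qi', _, qi', ⟨ha, hb⟩, Or.inr (Or.inl ⟨h1, h2, h, hs, rfl⟩), rfl,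
              Relation.ReflTransGen.refl⟩
      · have h2 : ℓ ∈ i.L := hℓ.resolve_right h1
        simp only [h, h1, h2, if_true, if_false, List.map_singleton, W_snoc_iff,
          List.append_nil, List.map_nil]
        constructor
        · rintro ⟨a, b, c, d, ⟨ha, hb⟩, hs, rfl, he⟩
          rcases hs with hs | hs | hs | hs
          · obtain rfl : qt' = a := hs.2.2.2
            exact ⟨ha, b, d, hb, hs.2.2.1, he⟩
          · exact absurd hs.1 h1
          · exact absurd hs.2.1 h1
          · exact absurd hs.1 h
        · rintro ⟨ha, b, d, hb, hq, he⟩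
          exact ⟨qt', b, qt', d, ⟨ha, hb⟩, Or.inl ⟨h2, h1, hq, rfl⟩, rfl, he⟩
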